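/- (Maximum principle) Let u be a solution of the time-fractional diffusion equation (D_t^α u)(x,t) = ∑_{j=1}^n ∂/∂x_j(p(x) ∂u/∂x_j(x,t)) − q(x)u(x,t) + F(x,t) in Ω_T = G×(0,T), and assume F(x,t) ≤ 0 for all (x,t) ∈ Ω_T. Then for every (x,t) ∈ Ḡ×[0,T] one has u(x,t) ≤ max{0, max_{(y,s) ∈ S_G^T} u(y,s)}, where S_G^T = (Ḡ×{0}) ∪ (S×[0,T]) is the parabolic boundary; in particular either u ≤ 0 on Ḡ×[0,T] or u attains its positive maximum on S_G^T. -/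

import Mathlib

open MeasureTheory Set Filter Topology

/-- The Caputo fractional derivative of order `α` of `f` at `t`:
`(D^α f)(t) = (1/Γ(1−α)) ∫₀ᵗ (t−s)^{−α} f'(s) ds`. -/
noncomputable def caputo (α : ℝ) (f : ℝ → ℝ) (t : ℝ) : ℝ :=
  (1 / Real.Gamma (1 - α)) * ∫ s in (0:ℝ)..t, (t - s) ^ (-α) * deriv f s

/-- The elliptic part `div(p(x) grad w)(x) = ∑_j ∂/∂x_j (p(x) ∂w/∂x_j)(x)`. -/
noncomputable def divPGrad (n : ℕ) (p : (Fin n → ℝ) → ℝ) (w : (Fin n → ℝ) → ℝ)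
    (x : Fin n → ℝ) : ℝ :=
  ∑ j : Fin n, fderiv ℝ (fun y => p y * fderiv ℝ w y (Pi.single j 1)) x (Pi.single j 1)

/-- `u` is a (classical) solution of the time-fractional diffusion equation
`(D_t^α u)(x,t) = div(p grad u) − q u + F` in `Ω_T = G × (0,T)`:
`u ∈ C(Ḡ×[0,T])`, twice continuously differentiable in `x` on `G`, for each `x ∈ G`
the map `t ↦ u(x,t)` is `C¹` on `(0,T]` with integrable derivative, and the equation
holds pointwise in `Ω_T`. -/
def IsSolutionTFDE (n : ℕ) (α T : ℝ) (G : Set (Fin n → ℝ))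
    (p q : (Fin n → ℝ) → ℝ) (F : (Fin n → ℝ) → ℝ → ℝ)
    (u : (Fin n → ℝ) → ℝ → ℝ) : Prop :=
  ContinuousOn (fun z : (Fin n → ℝ) × ℝ => u z.1 z.2) (closure G ×ˢ Set.Icc 0 T) ∧
  (∀ t ∈ Set.Ioo (0:ℝ) T, ContDiffOn ℝ 2 (fun x => u x t) G) ∧
  (∀ x ∈ G, ContDiffOn ℝ 1 (u x) (Set.Ioc 0 T) ∧
    IntervalIntegrable (deriv (u x)) MeasureTheory.volume 0 T) ∧
  (∀ x ∈ G, ∀ t ∈ Set.Ioo (0:ℝ) T,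
    caputo α (u x) t = divPGrad n p (fun y => u y t) x - q x * u x t + F x t)

/-!
At a positive maximum attained off the parabolic boundary, the first and second order conditions
make the elliptic part nonpositive, so the equation forces the Caputo derivative to be nonpositive.
But integrating by parts in the Caputo derivative against the kernel `(t - s) ^ (-α)` gives
`D^α f (t) ≥ t ^ (-α) * (f t - f 0) / Γ(1 - α)` whenever `f` attains its maximum over `[0, t]` at
`t`, and this is positive as soon as the maximum exceeds the initial value.
-/

section Caputo

theorem intervalIntegrable_sub_rpow_mul {g : ℝ → ℝ} {a b r : ℝ} (hr : -1 < r) (hab : a < b)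
    (hg : IntervalIntegrable g volume a b) (hgc : ContinuousOn g (Ioc a b)) :
    IntervalIntegrable (fun s => (b - s) ^ r * g s) volume a b := by
  obtain ⟨c, hac, hcb⟩ := exists_between hab
  have away_from_singularity : IntervalIntegrable (fun s => (b - s) ^ r * g s) volume a c := by
    refine (hg.mono_set ?_).continuousOn_mul ?_
    · simpa only [uIcc_of_le hac.le, uIcc_of_le hab.le] using Icc_subset_Icc_right hcb.le
    · rw [uIcc_of_le hac.le]
      exact ContinuousOn.rpow_const (by fun_prop) fun s hs => .inl (by linarith [hs.2])
  have near_singularity : IntervalIntegrable (fun s => (b - s) ^ r * g s) volume c b := by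
    refine IntervalIntegrable.mul_continuousOn ?_ (hgc.mono ?_)
    · simpa using
        (intervalIntegral.intervalIntegrable_rpow' (a := b - c) (b := 0) hr).comp_sub_left b
    · rw [uIcc_of_le hcb.le]
      exact Icc_subset_Ioc hac le_rfl
  exact away_from_singularity.trans near_singularity

theorem continuousWithinAt_sub_rpow_mul_sub {f : ℝ → ℝ} {S : Set ℝ} {b r : ℝ} (hr : -1 < r)
    (hf : DifferentiableWithinAt ℝ f S b) :
    ContinuousWithinAt (fun s => (b - s) ^ r * (f b - f s)) S b := by
  have kernel_isBigO : (fun s => (b - s) ^ r) =O[𝓝[S] b] fun s => |b - s| ^ r :=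
    .of_norm_le fun s => Real.abs_rpow_le_abs_rpow _ _
  have increment_isBigO : (fun s => f b - f s) =O[𝓝[S] b] fun s => |b - s| := by
    simpa only [neg_sub, Real.norm_eq_abs, abs_sub_comm b] using
      hf.hasFDerivWithinAt.isBigO_sub.neg_left.norm_right
  have product_isBigO :
      (fun s => (b - s) ^ r * (f b - f s)) =O[𝓝[S] b] fun s => |b - s| ^ (r + 1) := by
    simpa only [Real.rpow_add_one' (abs_nonneg _) (by linarith : r + 1 ≠ 0)] using
      kernel_isBigO.mul increment_isBigO
  have majorant_tendsto : Tendsto (fun s => |b - s| ^ (r + 1)) (𝓝 b) (𝓝 0) := by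
    have : Continuous fun s => |b - s| ^ (r + 1) :=
      Continuous.rpow_const (by fun_prop) fun s => .inr (by linarith)
    simpa [Real.zero_rpow (by linarith : r + 1 ≠ 0)] using this.tendsto b
  simpa [ContinuousWithinAt] using
    product_isBigO.trans_tendsto (majorant_tendsto.mono_left nhdsWithin_le_nhds)

theorem continuousOn_sub_rpow_mul_sub {f : ℝ → ℝ} {a b r : ℝ} (hr : -1 < r)
    (hf : ContinuousOn f (Icc a b)) (hfb : DifferentiableWithinAt ℝ f (Icc a b) b) :
    ContinuousOn (fun s => (b - s) ^ r * (f b - f s)) (Icc a b) := by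
  intro s hs
  rcases hs.2.eq_or_lt with rfl | hsb
  · exact continuousWithinAt_sub_rpow_mul_sub hr hfb
  · exact (ContinuousWithinAt.rpow_const (by fun_prop) (.inl (sub_pos.2 hsb).ne')).mul
      (continuousWithinAt_const.sub (hf s hs))

theorem hasDerivAt_neg_sub_rpow_mul_sub {f : ℝ → ℝ} {b f' r s : ℝ} (hf : HasDerivAt f f' s)
    (hsb : s ≠ b) :
    HasDerivAt (fun x => -((b - x) ^ r * (f b - f x)))
      ((b - s) ^ r * f' + r * (b - s) ^ (r - 1) * (f b - f s)) s := by
  have kernel : HasDerivAt (fun x => (b - x) ^ r) (-1 * r * (b - s) ^ (r - 1)) s :=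
    ((hasDerivAt_id s).const_sub b).rpow_const (.inl (sub_ne_zero.2 hsb.symm))
  exact (kernel.mul (hf.const_sub (f b))).neg.congr_deriv (by ring)

variable {α : ℝ} {f : ℝ → ℝ}

/-- Differentiating `(b - s) ^ (-α) * (f b - f s)` leaves, besides the integrand, the term
`α * (b - s) ^ (-α - 1) * (f b - f s)`, which is nonnegative by maximality. Dropping it avoids
having to prove that it is integrable. -/
theorem sub_rpow_mul_sub_le_integral_of_isMaxOn {a b : ℝ} (hα : 0 ≤ α) (hα1 : α < 1)
    (hab : a ≤ b) (hf : ContinuousOn f (Icc a b)) (hf' : ∀ s ∈ Ioo a b, DifferentiableAt ℝ f s)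
    (hfb : DifferentiableWithinAt ℝ f (Icc a b) b)
    (hint : IntervalIntegrable (fun s => (b - s) ^ (-α) * deriv f s) volume a b)
    (hmax : IsMaxOn f (Icc a b) b) :
    (b - a) ^ (-α) * (f b - f a) ≤ ∫ s in a..b, (b - s) ^ (-α) * deriv f s := by
  have derivative_le : ∀ s ∈ Ioo a b,
      (b - s) ^ (-α) * deriv f s + -α * (b - s) ^ (-α - 1) * (f b - f s) ≤
        (b - s) ^ (-α) * deriv f s := by
    intro s hs
    have kernel_nonneg : 0 ≤ (b - s) ^ (-α - 1) := Real.rpow_nonneg (sub_nonneg.2 hs.2.le) _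
    have increment_nonneg : 0 ≤ f b - f s := sub_nonneg.2 (hmax (Ioo_subset_Icc_self hs))
    linarith [mul_nonneg (mul_nonneg hα kernel_nonneg) increment_nonneg]
  have := intervalIntegral.sub_le_integral_of_hasDeriv_right_of_le hab
    (continuousOn_sub_rpow_mul_sub (by linarith) hf hfb).neg
    (fun s hs =>
      (hasDerivAt_neg_sub_rpow_mul_sub (hf' s hs).hasDerivAt hs.2.ne).hasDerivWithinAt)
    ((intervalIntegrable_iff_integrableOn_Icc_of_le hab).1 hint) derivative_le
  simpa using this

variable {t : ℝ}

theorem le_caputo_of_isMaxOn (hα : 0 ≤ α) (hα1 : α < 1) (ht : 0 < t)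
    (hf : ContinuousOn f (Icc 0 t)) (hf' : ∀ s ∈ Ioc 0 t, DifferentiableAt ℝ f s)
    (hdc : ContinuousOn (deriv f) (Ioc 0 t)) (hint : IntervalIntegrable (deriv f) volume 0 t)
    (hmax : IsMaxOn f (Icc 0 t) t) :
    1 / Real.Gamma (1 - α) * (t ^ (-α) * (f t - f 0)) ≤ caputo α f t := by
  have h := sub_rpow_mul_sub_le_integral_of_isMaxOn hα hα1 ht.le hf
    (fun s hs => hf' s (Ioo_subset_Ioc_self hs))
    (hf' t (right_mem_Ioc.2 ht)).differentiableWithinAt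
    (intervalIntegrable_sub_rpow_mul (by linarith) ht hint hdc) hmax
  rw [sub_zero] at h
  have : 0 < Real.Gamma (1 - α) := Real.Gamma_pos_of_pos (by linarith)
  unfold caputo
  gcongr

theorem caputo_pos_of_isMaxOn (hα : 0 ≤ α) (hα1 : α < 1) (ht : 0 < t)
    (hf : ContinuousOn f (Icc 0 t)) (hf' : ∀ s ∈ Ioc 0 t, DifferentiableAt ℝ f s)
    (hdc : ContinuousOn (deriv f) (Ioc 0 t)) (hint : IntervalIntegrable (deriv f) volume 0 t)
    (hmax : IsMaxOn f (Icc 0 t) t) (h0 : f 0 < f t) : 0 < caputo α f t := by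
  have : 0 < Real.Gamma (1 - α) := Real.Gamma_pos_of_pos (by linarith)
  have : 0 < f t - f 0 := sub_pos.2 h0
  exact (by positivity : 0 < 1 / Real.Gamma (1 - α) * (t ^ (-α) * (f t - f 0))).trans_le
    (le_caputo_of_isMaxOn hα hα1 ht hf hf' hdc hint hmax)

end Caputo

section Elliptic

/-- Otherwise the second derivative test makes `a` a local minimum as well, so `f` is locally
constant. -/
theorem deriv_deriv_nonpos_of_isLocalMax {f : ℝ → ℝ} {a : ℝ} (hf : ContinuousAt f a)
    (hmax : IsLocalMax f a) : deriv (deriv f) a ≤ 0 := by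
  by_contra! hpos
  have hmin : IsLocalMin f a := isLocalMin_of_deriv_deriv_pos hpos hmax.deriv_eq_zero hf
  have hconst : f =ᶠ[𝓝 a] fun _ => f a := by
    filter_upwards [hmax, hmin] with s hle hge using le_antisymm hle hge
  have : deriv (deriv f) a = 0 := by simp [hconst.deriv.deriv_eq]
  exact hpos.ne' this

theorem fderiv_fderiv_apply_nonpos_of_isLocalMax {E : Type*} [NormedAddCommGroup E]
    [NormedSpace ℝ E] {w : E → ℝ} {x v : E} (hw : ∀ᶠ y in 𝓝 x, DifferentiableAt ℝ w y)
    (hw' : DifferentiableAt ℝ (fun y => fderiv ℝ w y v) x) (hmax : IsLocalMax w x) :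
    fderiv ℝ (fun y => fderiv ℝ w y v) x v ≤ 0 := by
  have hline (s : ℝ) : HasDerivAt (fun s : ℝ => x + s • v) v s := by
    simpa using ((hasDerivAt_id s).smul_const v).const_add x
  have hline_tendsto : Tendsto (fun s : ℝ => x + s • v) (𝓝 0) (𝓝 x) := by
    simpa using (hline 0).continuousAt.tendsto
  have hderiv : deriv (fun s : ℝ => w (x + s • v)) =ᶠ[𝓝 0] fun s => fderiv ℝ w (x + s • v) v := by
    filter_upwards [hline_tendsto.eventually hw] with s hs
    exact (hs.hasFDerivAt.comp_hasDerivAt s (hline s)).deriv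
  have hcont : ContinuousAt (fun s : ℝ => w (x + s • v)) 0 := by
    refine ContinuousAt.comp' (f := fun s : ℝ => x + s • v) ?_ (hline 0).continuousAt
    simpa using hw.self_of_nhds.continuousAt
  have hmax_line : IsLocalMax (fun s : ℝ => w (x + s • v)) 0 := by
    simpa [IsLocalMax, IsMaxFilter] using hline_tendsto.eventually hmax
  calc fderiv ℝ (fun y => fderiv ℝ w y v) x v
      = deriv (fun s : ℝ => fderiv ℝ w (x + s • v) v) 0 := hw'.lineDeriv_eq_fderiv.symm
    _ = deriv (deriv fun s : ℝ => w (x + s • v)) 0 := hderiv.deriv_eq.symm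
    _ ≤ 0 := deriv_deriv_nonpos_of_isLocalMax hcont hmax_line

theorem divPGrad_nonpos_of_isLocalMax {n : ℕ} {p w : (Fin n → ℝ) → ℝ} {x : Fin n → ℝ}
    (hp : DifferentiableAt ℝ p x) (hp0 : 0 ≤ p x) (hw : ContDiffAt ℝ 2 w x)
    (hmax : IsLocalMax w x) : divPGrad n p w x ≤ 0 := by
  refine Finset.sum_nonpos fun j _ => ?_
  have hdiff : ∀ᶠ y in 𝓝 x, DifferentiableAt ℝ w y :=
    (hw.eventually (by simp)).mono fun y hy => hy.differentiableAt two_ne_zero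
  have hpartial : DifferentiableAt ℝ (fun y => fderiv ℝ w y (Pi.single j 1)) x :=
    ((hw.fderiv_right (m := 1) (by norm_num)).differentiableAt one_ne_zero).clm_apply
      (differentiableAt_const _)
  have product_rule :
      fderiv ℝ (fun y => p y * fderiv ℝ w y (Pi.single j 1)) x (Pi.single j 1) =
        p x * fderiv ℝ (fun y => fderiv ℝ w y (Pi.single j 1)) x (Pi.single j 1) := by
    simp [fderiv_fun_mul hp hpartial, hmax.fderiv_eq_zero]
  rw [product_rule]
  exact mul_nonpos_of_nonneg_of_nonpos hp0
    (fderiv_fderiv_apply_nonpos_of_isLocalMax hdiff hpartial hmax)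

end Elliptic

section MaximumPrinciple

/-- The parabolic boundary `S_G^T = (Ḡ × {0}) ∪ (S × [0,T])` of the cylinder `G × (0,T)`. -/
def parabolicBoundary {X : Type*} [TopologicalSpace X] (G : Set X) (T : ℝ) : Set (X × ℝ) :=
  (closure G ×ˢ {0}) ∪ (frontier G ×ˢ Icc 0 T)

theorem parabolicBoundary_subset {X : Type*} [TopologicalSpace X] {G : Set X} {T : ℝ}
    (hT : 0 ≤ T) : parabolicBoundary G T ⊆ closure G ×ˢ Icc 0 T :=
  union_subset (prod_mono_right (singleton_subset_iff.2 (left_mem_Icc.2 hT)))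
    (prod_mono_left frontier_subset_closure)

/-- Classical subsolutions of the homogeneous time-fractional diffusion equation in `G × (0,T)`.
Regularity in time is only asked for on the open interval `(0,T)`, where the inequality is
imposed. -/
structure IsSubsolutionTFDE (n : ℕ) (α T : ℝ) (G : Set (Fin n → ℝ)) (p q : (Fin n → ℝ) → ℝ)
    (u : (Fin n → ℝ) → ℝ → ℝ) : Prop where
  continuousOn : ContinuousOn (fun z : (Fin n → ℝ) × ℝ => u z.1 z.2) (closure G ×ˢ Icc 0 T)
  contDiffOn_space : ∀ t ∈ Ioo 0 T, ContDiffOn ℝ 2 (fun x => u x t) G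
  contDiffOn_time : ∀ x ∈ G, ContDiffOn ℝ 1 (u x) (Ioo 0 T)
  intervalIntegrable_deriv : ∀ x ∈ G, IntervalIntegrable (deriv (u x)) volume 0 T
  caputo_le : ∀ x ∈ G, ∀ t ∈ Ioo 0 T,
    caputo α (u x) t ≤ divPGrad n p (fun y => u y t) x - q x * u x t

variable {n : ℕ} {α T : ℝ} {G : Set (Fin n → ℝ)} {p q : (Fin n → ℝ) → ℝ}
  {u : (Fin n → ℝ) → ℝ → ℝ}

theorem IsSolutionTFDE.isSubsolutionTFDE {F : (Fin n → ℝ) → ℝ → ℝ}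
    (hu : IsSolutionTFDE n α T G p q F u) (hF : ∀ x ∈ G, ∀ t ∈ Ioo 0 T, F x t ≤ 0) :
    IsSubsolutionTFDE n α T G p q u where
  continuousOn := hu.1
  contDiffOn_space := hu.2.1
  contDiffOn_time x hx := (hu.2.2.1 x hx).1.mono Ioo_subset_Ioc_self
  intervalIntegrable_deriv x hx := (hu.2.2.1 x hx).2
  caputo_le x hx t ht := by linarith [hu.2.2.2 x hx t ht, hF x hx t ht]

namespace IsSubsolutionTFDE

theorem continuousOn_time (hu : IsSubsolutionTFDE n α T G p q u) {x : Fin n → ℝ}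
    (hx : x ∈ closure G) : ContinuousOn (u x) (Icc 0 T) :=
  hu.continuousOn.comp (f := fun t : ℝ => (x, t)) (by fun_prop) fun _ ht => ⟨hx, ht⟩

theorem caputo_apply_pos_of_isMaxOn (hu : IsSubsolutionTFDE n α T G p q u) (hα : 0 ≤ α)
    (hα1 : α < 1) {x : Fin n → ℝ} (hx : x ∈ G) {t : ℝ} (ht : t ∈ Ioo 0 T)
    (hmax : IsMaxOn (u x) (Icc 0 t) t) (h0 : u x 0 < u x t) : 0 < caputo α (u x) t := by
  have hsub : Ioc 0 t ⊆ Ioo 0 T := Ioc_subset_Ioo_right ht.2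
  have htime := hu.contDiffOn_time x hx
  refine caputo_pos_of_isMaxOn hα hα1 ht.1 ?_ ?_ ?_ ?_ hmax h0
  · exact (hu.continuousOn_time (subset_closure hx)).mono (Icc_subset_Icc_right ht.2.le)
  · exact fun s hs =>
      (htime.differentiableOn one_ne_zero).differentiableAt (isOpen_Ioo.mem_nhds (hsub hs))
  · exact (htime.continuousOn_deriv_of_isOpen isOpen_Ioo le_rfl).mono hsub
  · refine (hu.intervalIntegrable_deriv x hx).mono_set ?_
    simpa only [uIcc_of_le ht.1.le, uIcc_of_le (ht.1.trans ht.2).le] using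
      Icc_subset_Icc_right ht.2.le

theorem le_initial_of_isMaxOn (hu : IsSubsolutionTFDE n α T G p q u) (hα : 0 ≤ α) (hα1 : α < 1)
    (hG : IsOpen G) {x : Fin n → ℝ} (hx : x ∈ G) {t : ℝ} (ht : t ∈ Ioo 0 T)
    (hp : DifferentiableAt ℝ p x) (hp0 : 0 ≤ p x) (hq0 : 0 ≤ q x) (hpos : 0 ≤ u x t)
    (hmax_space : IsLocalMax (fun y => u y t) x) (hmax_time : IsMaxOn (u x) (Icc 0 t) t) :
    u x t ≤ u x 0 := by
  by_contra! h0
  have caputo_pos : 0 < caputo α (u x) t := hu.caputo_apply_pos_of_isMaxOn hα hα1 hx ht hmax_time h0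
  have elliptic_nonpos : divPGrad n p (fun y => u y t) x ≤ 0 :=
    divPGrad_nonpos_of_isLocalMax hp hp0
      ((hu.contDiffOn_space t ht).contDiffAt (hG.mem_nhds hx)) hmax_space
  linarith [hu.caputo_le x hx t ht, mul_nonneg hq0 hpos]

/-- The maximum is taken over `Ḡ × [0,t]` rather than `Ḡ × [0,T]`, so that it is attained before
time `T`, where the differential inequality is available. -/
theorem le_of_le_parabolicBoundary_of_lt (hu : IsSubsolutionTFDE n α T G p q u) (hα : 0 ≤ α)
    (hα1 : α < 1) (hG : IsOpen G) (hGb : Bornology.IsBounded G) (hp : DifferentiableOn ℝ p G)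
    (hp0 : ∀ x ∈ G, 0 ≤ p x) (hq0 : ∀ x ∈ G, 0 ≤ q x) {M : ℝ} (hM : 0 ≤ M)
    (hbdry : ∀ z ∈ parabolicBoundary G T, u z.1 z.2 ≤ M) {x : Fin n → ℝ} (hx : x ∈ closure G)
    {t : ℝ} (ht : t ∈ Ico 0 T) : u x t ≤ M := by
  by_contra! hlt
  obtain ⟨⟨y, s⟩, ⟨hy, hs⟩, hmax⟩ : ∃ z ∈ closure G ×ˢ Icc 0 t,
      IsMaxOn (fun z : (Fin n → ℝ) × ℝ => u z.1 z.2) (closure G ×ˢ Icc 0 t) z :=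
    (hGb.isCompact_closure.prod isCompact_Icc).exists_isMaxOn ⟨(x, t), hx, ht.1, le_rfl⟩
      (hu.continuousOn.mono (prod_mono_right (Icc_subset_Icc_right ht.2.le)))
  dsimp only at hy hs
  have hmax_apply {z r} (hz : z ∈ closure G) (hr : r ∈ Icc 0 t) : u z r ≤ u y s :=
    hmax (mk_mem_prod hz hr)
  have hMlt : M < u y s := hlt.trans_le (hmax_apply hx (right_mem_Icc.2 ht.1))
  have off_boundary : (y, s) ∉ parabolicBoundary G T := fun h => hMlt.not_ge (hbdry _ h)
  have hyG : y ∈ G := by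
    by_contra hyG
    exact off_boundary (.inr ⟨hG.frontier_eq ▸ ⟨hy, hyG⟩, hs.1, hs.2.trans ht.2.le⟩)
  have hs0 : 0 < s := hs.1.lt_of_ne fun h => off_boundary (.inl ⟨hy, h.symm⟩)
  have hle_initial : u y s ≤ u y 0 :=
    hu.le_initial_of_isMaxOn hα hα1 hG hyG ⟨hs0, hs.2.trans_lt ht.2⟩
      (hp.differentiableAt (hG.mem_nhds hyG)) (hp0 y hyG) (hq0 y hyG) (hM.trans hMlt.le)
      (by filter_upwards [hG.mem_nhds hyG] with z hz using hmax_apply (subset_closure hz) hs)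
      (fun r hr => hmax_apply hy ⟨hr.1, hr.2.trans hs.2⟩)
  exact hMlt.not_ge (hle_initial.trans (hbdry (y, 0) (.inl ⟨hy, rfl⟩)))

theorem le_of_le_parabolicBoundary (hu : IsSubsolutionTFDE n α T G p q u) (hα : 0 ≤ α)
    (hα1 : α < 1) (hG : IsOpen G) (hGb : Bornology.IsBounded G) (hp : DifferentiableOn ℝ p G)
    (hp0 : ∀ x ∈ G, 0 ≤ p x) (hq0 : ∀ x ∈ G, 0 ≤ q x) {M : ℝ} (hM : 0 ≤ M)
    (hbdry : ∀ z ∈ parabolicBoundary G T, u z.1 z.2 ≤ M) {x : Fin n → ℝ} (hx : x ∈ closure G)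
    {t : ℝ} (ht : t ∈ Icc 0 T) : u x t ≤ M := by
  rcases ht.1.eq_or_lt with rfl | ht0
  · exact hbdry (x, 0) (.inl ⟨hx, rfl⟩)
  have hclosure : closure (Ico 0 T) = Icc 0 T := closure_Ico (ht0.trans_le ht.2).ne
  exact le_on_closure
    (fun s hs => hu.le_of_le_parabolicBoundary_of_lt hα hα1 hG hGb hp hp0 hq0 hM hbdry hx hs)
    (hclosure ▸ hu.continuousOn_time hx) continuousOn_const (hclosure ▸ ht)

end IsSubsolutionTFDE

theorem maximum_principle_TFDE_general (hα : 0 ≤ α) (hα1 : α < 1) (hG : IsOpen G)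
    (hGb : Bornology.IsBounded G) (hp : DifferentiableOn ℝ p G) (hp0 : ∀ x ∈ G, 0 ≤ p x)
    (hq0 : ∀ x ∈ G, 0 ≤ q x) (hu : IsSubsolutionTFDE n α T G p q u) :
    ∀ x ∈ closure G, ∀ t ∈ Icc 0 T,
      u x t ≤ max 0 (sSup ((fun z : (Fin n → ℝ) × ℝ => u z.1 z.2) '' parabolicBoundary G T)) := by
  intro x hx t ht
  have hbdd : BddAbove ((fun z : (Fin n → ℝ) × ℝ => u z.1 z.2) '' parabolicBoundary G T) :=
    ((hGb.isCompact_closure.prod isCompact_Icc).bddAbove_image hu.continuousOn).mono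
      (image_mono (parabolicBoundary_subset (ht.1.trans ht.2)))
  exact hu.le_of_le_parabolicBoundary hα hα1 hG hGb hp hp0 hq0 (le_max_left _ _)
    (fun z hz => (le_csSup hbdd ⟨z, hz, rfl⟩).trans (le_max_right _ _)) hx ht

end MaximumPrinciple

/-- Maximum principle: if `u` solves the time-fractional diffusion
equation in `Ω_T = G×(0,T)` with `F ≤ 0` in `Ω_T`, then for every
`(x,t) ∈ Ḡ×[0,T]`, `u(x,t) ≤ max{0, sup_{S_G^T} u}` where
`S_G^T = (Ḡ×{0}) ∪ (S×[0,T])` is the parabolic boundary. -/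
theorem maximum_principle_TFDE (n : ℕ) (α T : ℝ) (hα : 0 < α) (hα1 : α < 1) (hT : 0 < T)
    (G : Set (Fin n → ℝ)) (hG : IsOpen G) (hGb : Bornology.IsBounded G)
    (p q : (Fin n → ℝ) → ℝ)
    (hp : ContDiffOn ℝ 1 p (closure G)) (hppos : ∀ x ∈ closure G, 0 < p x)
    (hq : ContinuousOn q (closure G)) (hqnn : ∀ x ∈ closure G, 0 ≤ q x)
    (F : (Fin n → ℝ) → ℝ → ℝ)
    (hF : ContinuousOn (fun z : (Fin n → ℝ) × ℝ => F z.1 z.2) (G ×ˢ Set.Ioo 0 T))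
    (u : (Fin n → ℝ) → ℝ → ℝ)
    (hu : IsSolutionTFDE n α T G p q F u)
    (hFneg : ∀ x ∈ G, ∀ t ∈ Set.Ioo (0:ℝ) T, F x t ≤ 0) :
    ∀ x ∈ closure G, ∀ t ∈ Set.Icc (0:ℝ) T,
      u x t ≤ max 0 (sSup ((fun z : (Fin n → ℝ) × ℝ => u z.1 z.2) ''
        ((closure G ×ˢ ({0} : Set ℝ)) ∪ (frontier G ×ˢ Set.Icc 0 T)))) :=
  maximum_principle_TFDE_general hα.le hα1 hG hGb
    ((hp.differentiableOn one_ne_zero).mono subset_closure)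
    (fun x hx => (hppos x (subset_closure hx)).le) (fun x hx => hqnn x (subset_closure hx))
    (hu.isSubsolutionTFDE hFneg)
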